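/- (S-link pairs) Let n ≥ 3. Let l and x be elements of one level L₁ of M_{n,n} with l the link element of L₁ and x ≠ l, and let L₂ be the other level. If S = {l} and T = L₂ ∪ {x}, then (S, T) is a maximal ST-pair of M_{n,n}. -/

import Mathlib

/-- The underlying set of the lattice `M_{n,n}`: a bottom element `0`, a top
element `1`, and two levels `a₁, …, aₙ` and `b₁, …, bₙ`.  Here `a i` (for
`i : Fin n`) stands for `a_{i+1}` and `b j` for `b_{j+1}`, so the link elements
are `aₙ = a ⟨n-1, _⟩` and `b₁ = b ⟨0, _⟩`. -/
inductive Mnn (n : ℕ) : Type where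
  | bot : Mnn n
  | top : Mnn n
  | a : Fin n → Mnn n
  | b : Fin n → Mnn n
deriving DecidableEq

namespace Mnn

/-- The order of `M_{n,n}`: `0` is least, `1` is greatest, `aᵢ ≤ b₁` for every
`i`, `aₙ ≤ bⱼ` for every `j`, and there are no other comparabilities besides
those forced by reflexivity. -/
def le {n : ℕ} : Mnn n → Mnn n → Prop
  | .bot, _ => True
  | .top, .top => True
  | .top, .bot => False
  | .top, .a _ => False
  | .top, .b _ => False
  | .a _, .top => True
  | .a _, .bot => False
  | .a i, .a j => i = j
  | .a i, .b j => (j : ℕ) = 0 ∨ (i : ℕ) = n - 1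
  | .b _, .top => True
  | .b _, .bot => False
  | .b _, .a _ => False
  | .b i, .b j => i = j

/-- The join operation of `M_{n,n}`. -/
def sup {n : ℕ} : Mnn n → Mnn n → Mnn n
  | .bot, x => x
  | .top, _ => .top
  | .a i, .bot => .a i
  | .a _, .top => .top
  | .a i, .a j => if i = j then .a i else .b ⟨0, Nat.lt_of_le_of_lt (Nat.zero_le _) i.isLt⟩
  | .a i, .b j => if (j : ℕ) = 0 ∨ (i : ℕ) = n - 1 then .b j else .top
  | .b i, .bot => .b i
  | .b _, .top => .top
  | .b i, .a j => if (i : ℕ) = 0 ∨ (j : ℕ) = n - 1 then .b i else .top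
  | .b i, .b j => if i = j then .b i else .top

/-- The meet operation of `M_{n,n}`. -/
def inf {n : ℕ} : Mnn n → Mnn n → Mnn n
  | .bot, _ => .bot
  | .top, x => x
  | .a _, .bot => .bot
  | .a i, .top => .a i
  | .a i, .a j => if i = j then .a i else .bot
  | .a i, .b j => if (j : ℕ) = 0 ∨ (i : ℕ) = n - 1 then .a i else .bot
  | .b _, .bot => .bot
  | .b i, .top => .b i
  | .b i, .a j => if (i : ℕ) = 0 ∨ (j : ℕ) = n - 1 then .a j else .bot
  | .b i, .b j => if i = j then .b i
      else .a ⟨n - 1, Nat.sub_lt (Nat.lt_of_le_of_lt (Nat.zero_le _) i.isLt) Nat.one_pos⟩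

theorem le_refl' {n : ℕ} (x : Mnn n) : le x x := by cases x <;> simp [le]

theorem le_trans' {n : ℕ} (x y z : Mnn n) (hxy : le x y) (hyz : le y z) : le x z := by
  cases x <;> cases y <;> cases z <;> simp_all [le] <;> omega

theorem le_antisymm' {n : ℕ} (x y : Mnn n) (hxy : le x y) (hyx : le y x) : x = y := by
  cases x <;> cases y <;> simp_all [le]

theorem le_sup_left' {n : ℕ} (x y : Mnn n) : le x (sup x y) := by
  cases x <;> cases y <;> dsimp only [sup] <;> (try split_ifs) <;> simp_all [le]

theorem le_sup_right' {n : ℕ} (x y : Mnn n) : le y (sup x y) := by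
  cases x <;> cases y <;> dsimp only [sup] <;> (try split_ifs) <;> simp_all [le]

theorem sup_le' {n : ℕ} (x y z : Mnn n) (hxz : le x z) (hyz : le y z) :
    le (sup x y) z := by
  cases x <;> cases y <;> cases z <;> dsimp only [sup] <;> (try split_ifs) <;>
    simp_all [le, Fin.ext_iff] <;> omega

theorem inf_le_left' {n : ℕ} (x y : Mnn n) : le (inf x y) x := by
  cases x <;> cases y <;> dsimp only [inf] <;> (try split_ifs) <;> simp_all [le]

theorem inf_le_right' {n : ℕ} (x y : Mnn n) : le (inf x y) y := by
  cases x <;> cases y <;> dsimp only [inf] <;> (try split_ifs) <;> simp_all [le]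

theorem le_inf' {n : ℕ} (x y z : Mnn n) (hxy : le x y) (hxz : le x z) :
    le x (inf y z) := by
  cases x <;> cases y <;> cases z <;> dsimp only [inf] <;> (try split_ifs) <;>
    simp_all [le, Fin.ext_iff] <;> omega

/-- `M_{n,n}` is a lattice. -/
instance instLattice (n : ℕ) : Lattice (Mnn n) where
  le := le
  sup := sup
  inf := inf
  le_refl := le_refl'
  le_trans := le_trans'
  le_antisymm := le_antisymm'
  le_sup_left := le_sup_left'
  le_sup_right := le_sup_right'
  sup_le := sup_le'
  inf_le_left := inf_le_left'
  inf_le_right := inf_le_right'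
  le_inf := le_inf'

/-- `M_{n,n}* = M_{n,n} ∖ {0, 1}`, the set of non-identity elements. -/
def star (n : ℕ) : Set (Mnn n) := {x | x ≠ .bot ∧ x ≠ .top}

/-- The level `{a₁, …, aₙ}` of `M_{n,n}`. -/
def aLevel (n : ℕ) : Set (Mnn n) := Set.range Mnn.a

/-- The level `{b₁, …, bₙ}` of `M_{n,n}`. -/
def bLevel (n : ℕ) : Set (Mnn n) := Set.range Mnn.b

/-- The link element `aₙ` of the level `{a₁, …, aₙ}`. -/
def aLink (n : ℕ) (h : 0 < n) : Mnn n := .a ⟨n - 1, Nat.sub_lt h Nat.one_pos⟩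

/-- The link element `b₁` of the level `{b₁, …, bₙ}`. -/
def bLink (n : ℕ) (h : 0 < n) : Mnn n := .b ⟨0, h⟩

end Mnn

/-- `L` is `ST`-meet distributive. -/
def IsSTMeetDistrib {α : Type*} [Lattice α] (S T : Set α) : Prop :=
  ∀ s ∈ S, ∀ t₁ ∈ T, ∀ t₂ ∈ T, s ⊓ (t₁ ⊔ t₂) = (s ⊓ t₁) ⊔ (s ⊓ t₂)

/-- `L` is `ST`-join distributive. -/
def IsSTJoinDistrib {α : Type*} [Lattice α] (S T : Set α) : Prop :=
  ∀ s ∈ S, ∀ t₁ ∈ T, ∀ t₂ ∈ T, s ⊔ (t₁ ⊓ t₂) = (s ⊔ t₁) ⊓ (s ⊔ t₂)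

/-- `L` is `ST`-distributive. -/
def IsSTDistrib {α : Type*} [Lattice α] (S T : Set α) : Prop :=
  IsSTMeetDistrib S T ∧ IsSTJoinDistrib S T

/-- `(S, T)` is a maximal `ST`-pair of `M_{n,n}` (subject to the conditions of
the search problem: `S, T ⊆ M_{n,n}*`, `S ∩ T = ∅`, `S ≠ ∅`, `T ≠ ∅`). -/
def MaximalSTPair (n : ℕ) (S T : Set (Mnn n)) : Prop :=
  S ⊆ Mnn.star n ∧ T ⊆ Mnn.star n ∧ S ∩ T = ∅ ∧ S.Nonempty ∧ T.Nonempty ∧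
  IsSTDistrib S T ∧
  (¬ ∃ S' : Set (Mnn n), S ⊂ S' ∧ S' ⊆ Mnn.star n ∧ S' ∩ T = ∅ ∧ IsSTDistrib S' T) ∧
  (¬ ∃ T' : Set (Mnn n), T ⊂ T' ∧ T' ⊆ Mnn.star n ∧ S ∩ T' = ∅ ∧ IsSTDistrib S T')

/-!
The map `aᵢ ↔ bₙ₊₁₋ᵢ` extends to an anti-automorphism of `M_{n,n}` that exchanges the two links, so
only the link `l = aₙ` has to be treated.  It lies below the whole `b`-level, which reduces
distributivity to the modular identities `l ∨ (b ∧ x) = b ∧ (l ∨ x)`.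

For maximality, any further element `y` is some `aₖ` other than `l` and `x`.  Distributivity makes
an element of `S` that is disjoint from `t₁, t₂ ∈ T` disjoint from `t₁ ∨ t₂` as well.  If `y` is
added to `S`, this fails for `y` and `x ∨ bⱼ = 1`, where `bⱼ ≠ b₁`; if `y` is added to `T`, it fails
for `l` and `x ∨ y = b₁ ≥ l`.
-/

section Distrib

variable {α β : Type*} [Lattice α] [Lattice β] {S S' T T' : Set α}

theorem IsSTDistrib.mono (hS : S ⊆ S') (hT : T ⊆ T') (h : IsSTDistrib S' T') : IsSTDistrib S T :=
  ⟨fun s hs t₁ h₁ t₂ h₂ ↦ h.1 s (hS hs) t₁ (hT h₁) t₂ (hT h₂),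
    fun s hs t₁ h₁ t₂ h₂ ↦ h.2 s (hS hs) t₁ (hT h₁) t₂ (hT h₂)⟩

open OrderDual in
theorem IsSTDistrib.dual (h : IsSTDistrib S T) : IsSTDistrib (ofDual ⁻¹' S) (ofDual ⁻¹' T) :=
  ⟨h.2, h.1⟩

theorem IsSTDistrib.preimage (e : β ≃o α) (h : IsSTDistrib S T) :
    IsSTDistrib (e ⁻¹' S) (e ⁻¹' T) :=
  ⟨fun s hs t₁ h₁ t₂ h₂ ↦ e.injective <| by
      simpa only [map_sup, map_inf] using h.1 (e s) hs (e t₁) h₁ (e t₂) h₂,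
    fun s hs t₁ h₁ t₂ h₂ ↦ e.injective <| by
      simpa only [map_sup, map_inf] using h.2 (e s) hs (e t₁) h₁ (e t₂) h₂⟩

theorem IsSTMeetDistrib.disjoint_sup [OrderBot α] (h : IsSTMeetDistrib S T) {s t₁ t₂ : α}
    (hs : s ∈ S) (h₁ : t₁ ∈ T) (h₂ : t₂ ∈ T) (hd₁ : Disjoint s t₁) (hd₂ : Disjoint s t₂) :
    Disjoint s (t₁ ⊔ t₂) := by
  rw [disjoint_iff, h s hs t₁ h₁ t₂ h₂, hd₁.eq_bot, hd₂.eq_bot, sup_idem]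

theorem isSTDistrib_singleton_union_singleton {s x : α} (hle : ∀ t ∈ T, s ≤ t)
    (hmod : ∀ t ∈ T, s ⊔ (t ⊓ x) = t ⊓ (s ⊔ x)) : IsSTDistrib {s} (T ∪ {x}) := by
  constructor
  · have hmeet {t₁ : α} (h₁ : t₁ ∈ T) (t₂ : α) : s ⊓ (t₁ ⊔ t₂) = (s ⊓ t₁) ⊔ (s ⊓ t₂) := by
      rw [inf_of_le_left (hle t₁ h₁), inf_of_le_left (le_sup_of_le_left (hle t₁ h₁)),
        sup_of_le_left inf_le_left]
    rintro s rfl t₁ (h₁ | rfl) t₂ (h₂ | rfl)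
    · exact hmeet h₁ _
    · exact hmeet h₁ _
    · rw [sup_comm, hmeet h₂, sup_comm]
    · rw [sup_idem, sup_idem]
  · rintro s rfl t₁ (h₁ | rfl) t₂ (h₂ | rfl)
    · rw [sup_of_le_right (hle _ h₁), sup_of_le_right (hle _ h₂),
        sup_of_le_right (le_inf (hle _ h₁) (hle _ h₂))]
    · rw [hmod _ h₁, sup_of_le_right (hle _ h₁)]
    · rw [inf_comm, hmod _ h₂, sup_of_le_right (hle _ h₂), inf_comm]
    · rw [inf_idem, inf_idem]

end Distrib

theorem MaximalSTPair.of_forall_insert {n : ℕ} {S T : Set (Mnn n)} (hS : S ⊆ Mnn.star n)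
    (hT : T ⊆ Mnn.star n) (hST : S ∩ T = ∅) (hSne : S.Nonempty) (hTne : T.Nonempty)
    (hd : IsSTDistrib S T)
    (hmaxS : ∀ s ∈ Mnn.star n, s ∉ S → s ∉ T → ¬ IsSTDistrib (insert s S) T)
    (hmaxT : ∀ t ∈ Mnn.star n, t ∉ S → t ∉ T → ¬ IsSTDistrib S (insert t T)) :
    MaximalSTPair n S T := by
  refine ⟨hS, hT, hST, hSne, hTne, hd, ?_, ?_⟩
  · rintro ⟨S', hlt, hstar, hdisj, hd'⟩
    obtain ⟨s, hs, hsS⟩ := Set.exists_of_ssubset hlt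
    have hsT : s ∉ T := fun h ↦ hdisj.subset ⟨hs, h⟩
    exact hmaxS s (hstar hs) hsS hsT (hd'.mono (Set.insert_subset hs hlt.subset) subset_rfl)
  · rintro ⟨T', hlt, hstar, hdisj, hd'⟩
    obtain ⟨t, ht, htT⟩ := Set.exists_of_ssubset hlt
    have htS : t ∉ S := fun h ↦ hdisj.subset ⟨h, ht⟩
    exact hmaxT t (hstar ht) htS htT (hd'.mono subset_rfl (Set.insert_subset ht hlt.subset))

namespace Mnn

variable {n : ℕ} {i j : Fin n}

instance instBoundedOrder (n : ℕ) : BoundedOrder (Mnn n) where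
  bot := .bot
  bot_le _ := trivial
  top := .top
  le_top x := by cases x <;> exact trivial

theorem star_eq_aLevel_union_bLevel (n : ℕ) : star n = aLevel n ∪ bLevel n := by
  ext (_ | _ | i | j) <;> simp [star, aLevel, bLevel]

theorem a_le_b_iff (hn : 0 < n) : a i ≤ b j ↔ a i = aLink n hn ∨ b j = bLink n hn := by
  change ((j : ℕ) = 0 ∨ (i : ℕ) = n - 1) ↔ _
  simp [aLink, bLink, Fin.ext_iff, or_comm]

theorem a_ne_bot (i : Fin n) : a i ≠ ⊥ := nofun

theorem disjoint_a_a (h : a i ≠ a j) : Disjoint (a i) (a j) :=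
  disjoint_iff.2 (if_neg fun hij ↦ h (congrArg a hij))

theorem a_sup_a (hn : 0 < n) (h : a i ≠ a j) : a i ⊔ a j = bLink n hn :=
  if_neg fun hij ↦ h (congrArg a hij)

theorem b_inf_b (hn : 0 < n) (h : b i ≠ b j) : b i ⊓ b j = aLink n hn :=
  if_neg fun hij ↦ h (congrArg b hij)

theorem disjoint_a_b (h : ¬ a i ≤ b j) : Disjoint (a i) (b j) :=
  disjoint_iff.2 (if_neg h)

theorem a_sup_b (h : ¬ a i ≤ b j) : a i ⊔ b j = ⊤ :=
  if_neg h

/-- The anti-automorphism `aᵢ ↔ bₙ₊₁₋ᵢ` of `M_{n,n}`, as a map to itself rather than to its order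
dual; it exchanges the two levels and their links. -/
def reflect : Mnn n → Mnn n
  | .bot => .top
  | .top => .bot
  | .a i => .b i.rev
  | .b j => .a j.rev

theorem reflect_involutive : Function.Involutive (reflect (n := n)) := by
  rintro (_ | _ | i | j) <;> simp [reflect]

theorem reflect_le_reflect {x y : Mnn n} : reflect x ≤ reflect y ↔ y ≤ x := by
  change le _ _ ↔ le _ _
  rcases x with _ | _ | i | i <;> rcases y with _ | _ | j | j <;>
    simp only [reflect, le, Fin.ext_iff, Fin.val_rev] <;> omega

/-- The isomorphism of `M_{n,n}` with its order dual given by `Mnn.reflect`. -/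
def reflectIso (n : ℕ) : Mnn n ≃o (Mnn n)ᵒᵈ where
  toEquiv := reflect_involutive.toPerm.trans OrderDual.toDual
  map_rel_iff' := reflect_le_reflect

theorem preimage_reflect_star : reflect ⁻¹' star n = star n := by
  ext (_ | _ | i | j) <;> simp [star, reflect]

theorem preimage_reflect_bLevel : reflect ⁻¹' bLevel n = aLevel n := by
  ext (_ | _ | i | j) <;> simp [aLevel, bLevel, reflect]

theorem preimage_reflect_singleton (x : Mnn n) : reflect ⁻¹' {x} = {reflect x} :=
  Set.ext fun _ ↦ reflect_involutive.eq_iff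

theorem reflect_aLink (hn : 0 < n) : reflect (aLink n hn) = bLink n hn := by
  simp only [reflect, aLink, bLink, b.injEq, Fin.ext_iff, Fin.val_rev]
  omega

end Mnn

section Reflect

open Mnn

variable {n : ℕ} {S T : Set (Mnn n)}

theorem IsSTDistrib.preimage_reflect (h : IsSTDistrib S T) :
    IsSTDistrib (reflect ⁻¹' S) (reflect ⁻¹' T) :=
  h.dual.preimage (reflectIso n)

theorem MaximalSTPair.preimage_reflect (h : MaximalSTPair n S T) :
    MaximalSTPair n (reflect ⁻¹' S) (reflect ⁻¹' T) := by
  obtain ⟨hS, hT, hST, hSne, hTne, hd, hmaxS, hmaxT⟩ := h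
  have hsurj : Function.Surjective (reflect (n := n)) := reflect_involutive.surjective
  have hinv : Function.Involutive (Set.preimage (reflect (n := n))) := reflect_involutive.preimage
  have hmono : StrictMono (Set.preimage (reflect (n := n))) :=
    Set.monotone_preimage.strictMono_of_injective hinv.injective
  have hstar {U : Set (Mnn n)} (hU : U ⊆ star n) : reflect ⁻¹' U ⊆ star n :=
    preimage_reflect_star ▸ Set.preimage_mono hU
  have hdisj {U V : Set (Mnn n)} (hUV : U ∩ V = ∅) : reflect ⁻¹' U ∩ reflect ⁻¹' V = ∅ := by
    rw [← Set.preimage_inter, hUV, Set.preimage_empty]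
  refine ⟨hstar hS, hstar hT, hdisj hST, hSne.preimage hsurj, hTne.preimage hsurj,
    hd.preimage_reflect, ?_, ?_⟩
  · rintro ⟨S', hlt, hS', hST', hd'⟩
    exact hmaxS ⟨reflect ⁻¹' S', hinv S ▸ hmono hlt, hstar hS', hinv T ▸ hdisj hST',
      hinv T ▸ hd'.preimage_reflect⟩
  · rintro ⟨T', hlt, hT', hST', hd'⟩
    exact hmaxT ⟨reflect ⁻¹' T', hinv T ▸ hmono hlt, hstar hT', hinv S ▸ hdisj hST',
      hinv S ▸ hd'.preimage_reflect⟩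

end Reflect

namespace Mnn

variable {n : ℕ}

theorem isSTDistrib_aLink (hn : 0 < n) {i : Fin n} (hi : a i ≠ aLink n hn) :
    IsSTDistrib {aLink n hn} (bLevel n ∪ {a i}) := by
  apply isSTDistrib_singleton_union_singleton
  · rintro _ ⟨j, rfl⟩
    exact (a_le_b_iff hn).2 (.inl rfl)
  · rintro _ ⟨j, rfl⟩
    have hsup : aLink n hn ⊔ a i = bLink n hn := a_sup_a hn hi.symm
    rw [hsup]
    by_cases hj : b j = bLink n hn
    · have hle : a i ≤ b j := (a_le_b_iff hn).2 (.inr hj)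
      rw [inf_of_le_right hle, hsup, hj, inf_idem]
    · have hdisj : Disjoint (a i) (b j) := disjoint_a_b (by simp [a_le_b_iff hn, hi, hj])
      rw [hdisj.symm.eq_bot, sup_bot_eq]
      exact (b_inf_b hn hj).symm

theorem not_isSTMeetDistrib_of_a_mem_of_b_mem (hn : 0 < n) {S T : Set (Mnn n)} {i j k : Fin n}
    (hkS : a k ∈ S) (hiT : a i ∈ T) (hjT : b j ∈ T) (hk : a k ≠ aLink n hn)
    (hi : a i ≠ aLink n hn) (hj : b j ≠ bLink n hn) (hki : a k ≠ a i) :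
    ¬ IsSTMeetDistrib S T := by
  intro hd
  have hij : ¬ a i ≤ b j := by simp [a_le_b_iff hn, hi, hj]
  have hkj : ¬ a k ≤ b j := by simp [a_le_b_iff hn, hk, hj]
  have hdisj : Disjoint (a k) (a i ⊔ b j) :=
    hd.disjoint_sup hkS hiT hjT (disjoint_a_a hki) (disjoint_a_b hkj)
  rw [a_sup_b hij, disjoint_top] at hdisj
  exact a_ne_bot k hdisj

theorem not_isSTMeetDistrib_of_aLink_mem (hn : 0 < n) {S T : Set (Mnn n)} {i k : Fin n}
    (hS : aLink n hn ∈ S) (hiT : a i ∈ T) (hkT : a k ∈ T) (hi : a i ≠ aLink n hn)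
    (hk : a k ≠ aLink n hn) (hki : a k ≠ a i) : ¬ IsSTMeetDistrib S T := by
  intro hd
  have hdisj : Disjoint (aLink n hn) (a k ⊔ a i) :=
    hd.disjoint_sup hS hkT hiT (disjoint_a_a hk.symm) (disjoint_a_a hi.symm)
  rw [a_sup_a hn hki] at hdisj
  exact a_ne_bot _ (hdisj.eq_bot_of_le ((a_le_b_iff hn).2 (.inl rfl)))

theorem maximalSTPair_aLink (hn : 0 < n) {i : Fin n} (hi : a i ≠ aLink n hn) :
    MaximalSTPair n {aLink n hn} (bLevel n ∪ {a i}) := by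
  have hstar : insert (aLink n hn) (bLevel n ∪ {a i}) ⊆ star n := by
    rw [star_eq_aLevel_union_bLevel]
    rintro _ (rfl | hb | rfl)
    exacts [.inl ⟨_, rfl⟩, .inr hb, .inl ⟨i, rfl⟩]
  have exists_a {y : Mnn n} (hy : y ∈ star n) (hyT : y ∉ bLevel n ∪ {a i}) : ∃ k, a k = y :=
    ((star_eq_aLevel_union_bLevel n).subset hy).resolve_right fun hb ↦ hyT (.inl hb)
  have hrev : b i.rev ≠ bLink n hn := reflect_aLink hn ▸ reflect_involutive.injective.ne hi
  refine .of_forall_insert (Set.singleton_subset_iff.2 (hstar (Set.mem_insert _ _)))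
    ((Set.subset_insert _ _).trans hstar) ?_ (Set.singleton_nonempty _) ⟨a i, .inr rfl⟩
    (isSTDistrib_aLink hn hi) ?_ ?_
  · simpa [aLink, bLevel] using hi.symm
  · intro y hy hyS hyT hd
    obtain ⟨k, rfl⟩ := exists_a hy hyT
    exact not_isSTMeetDistrib_of_a_mem_of_b_mem hn (Set.mem_insert _ _) (.inr rfl)
      (.inl ⟨i.rev, rfl⟩) hyS hi hrev (fun hki ↦ hyT (.inr hki)) hd.1
  · intro y hy hyS hyT hd
    obtain ⟨k, rfl⟩ := exists_a hy hyT
    exact not_isSTMeetDistrib_of_aLink_mem hn (Set.mem_singleton _)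
      (Set.mem_insert_of_mem _ (.inr rfl)) (Set.mem_insert _ _) hi hyS
      (fun hki ↦ hyT (.inr hki)) hd.1

theorem maximalSTPair_bLink (hn : 0 < n) {j : Fin n} (hj : b j ≠ bLink n hn) :
    MaximalSTPair n {bLink n hn} (aLevel n ∪ {b j}) := by
  have hrev : reflect (b j) ≠ aLink n hn := by
    rwa [Ne, reflect_involutive.eq_iff, reflect_aLink]
  have hpair : MaximalSTPair n {aLink n hn} (bLevel n ∪ {reflect (b j)}) :=
    maximalSTPair_aLink hn hrev
  simpa only [Set.preimage_union, preimage_reflect_bLevel, preimage_reflect_singleton,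
    reflect_aLink, reflect_involutive (b j)] using hpair.preimage_reflect

end Mnn

theorem s_link_maximal_general (n : ℕ) (hn : 0 < n) :
    (∀ i : Fin n, Mnn.a i ≠ Mnn.aLink n hn →
      MaximalSTPair n {Mnn.aLink n hn} (Mnn.bLevel n ∪ {Mnn.a i})) ∧
    (∀ j : Fin n, Mnn.b j ≠ Mnn.bLink n hn →
      MaximalSTPair n {Mnn.bLink n hn} (Mnn.aLevel n ∪ {Mnn.b j})) :=
  ⟨fun _ ↦ Mnn.maximalSTPair_aLink hn, fun _ ↦ Mnn.maximalSTPair_bLink hn⟩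

/-- S-link pairs are maximal `ST`-pairs of `M_{n,n}`: `S` consists of the link
of one level `L₁`, and `T` is the other level together with one further
element `x ≠ l` of `L₁`. -/
theorem s_link_maximal (n : ℕ) (hn : 3 ≤ n) :
    (∀ i : Fin n, Mnn.a i ≠ Mnn.aLink n (by omega) →
      MaximalSTPair n {Mnn.aLink n (by omega)} (Mnn.bLevel n ∪ {Mnn.a i})) ∧
    (∀ j : Fin n, Mnn.b j ≠ Mnn.bLink n (by omega) →
      MaximalSTPair n {Mnn.bLink n (by omega)} (Mnn.aLevel n ∪ {Mnn.b j})) :=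
  s_link_maximal_general n (by omega)
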